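/- The infinite series ∑_{n=1}^{∞} 1/(n(4n−3)) converges to (π + 6·ln 2)/6. -/

import Mathlib

open Real

/-!
By partial fractions `1 / (n (4n - 3)) = (4 / (4n - 3) - 1 / n) / 3`. The sum of `1 / (4n - 3)`
is half of (Leibniz partial sum + sum of odd reciprocals), and the odd reciprocals up to `4N` sum
to `H (4N) - H (2N) / 2`, where `H` denotes harmonic numbers. Hence the `N`-th partial sum equals
`(2 L (2N) + 2 H (4N) - H (2N) - H N) / 3`, where `L` denotes the partial sums of the Leibniz
series. Since `L → π / 4` and `H n - log n → γ`, the Euler constants cancel and the logarithms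
leave `2 log 4 - log 2 = 3 log 2`, so the limit is `(π / 2 + 3 log 2) / 3`.
-/

/-- The partial sums in terms of harmonic numbers and the Leibniz series for `π / 4`. -/
lemma partial_sum_eq (N : ℕ) :
    ∑ n ∈ Finset.range N, 1 / (((n:ℝ)+1) * (4*((n:ℝ)+1)-3)) =
      (2 * ∑ i ∈ Finset.range (2 * N), (-1 : ℝ) ^ i / (2 * i + 1)
        + 2 * (harmonic (4 * N) : ℝ) - (harmonic (2 * N) : ℝ) - (harmonic N : ℝ)) / 3 := by
  induction N with
  | zero => simp
  | succ N ih =>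
    rw [Finset.sum_range_succ, ih, show 2 * (N + 1) = 2 * N + 1 + 1 by ring,
      show 4 * (N + 1) = 4 * N + 1 + 1 + 1 + 1 by ring]
    simp only [Finset.sum_range_succ, harmonic_succ]
    have h0 : (N:ℝ) + 1 ≠ 0 := by positivity
    have h1 : 4 * (N:ℝ) + 1 ≠ 0 := by positivity
    have h2 : 2 * (N:ℝ) + 1 ≠ 0 := by positivity
    have h3 : 4 * (N:ℝ) + 3 ≠ 0 := by positivity
    have e1 : 4 * ((N:ℝ) + 1) - 3 = 4 * N + 1 := by ring
    have e2 : 2 * (2 * (N:ℝ)) + 1 = 4 * N + 1 := by ring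
    have e3 : 2 * (2 * (N:ℝ) + 1) + 1 = 4 * N + 3 := by ring
    have e4 : 4 * (N:ℝ) + 1 + 1 = 2 * (2 * N + 1) := by ring
    have e5 : 4 * (N:ℝ) + 3 + 1 = 4 * (N + 1) := by ring
    have e6 : 2 * (N:ℝ) + 1 + 1 = 2 * (N + 1) := by ring
    have e7 : (-1 : ℝ) ^ (2 * N) = 1 := by simp [pow_mul]
    have e8 : 4 * (N:ℝ) + 2 + 1 = 4 * N + 3 := by ring
    push_cast
    rw [pow_succ, e7, e1, e2, e3, e4, e5, e6, e8]
    field_simp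
    ring

theorem stmt_6 :
    HasSum (fun n : ℕ => 1 / (((n:ℝ)+1) * (4*((n:ℝ)+1)-3))) ((π + 6 * Real.log 2) / 6) := by
  have nonneg : ∀ n : ℕ, 0 ≤ 1 / (((n:ℝ)+1) * (4*((n:ℝ)+1)-3)) := by
    intro n
    have e : 4 * ((n:ℝ) + 1) - 3 = 4 * n + 1 := by ring
    rw [e]
    positivity
  rw [hasSum_iff_tendsto_nat_of_nonneg nonneg]
  have t2 : Filter.Tendsto (fun N : ℕ => 2 * N) Filter.atTop Filter.atTop :=
    Filter.tendsto_id.const_mul_atTop' (by norm_num)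
  have t4 : Filter.Tendsto (fun N : ℕ => 4 * N) Filter.atTop Filter.atTop :=
    Filter.tendsto_id.const_mul_atTop' (by norm_num)
  have L := tendsto_sum_pi_div_four.comp t2
  have H1 := tendsto_harmonic_sub_log
  have H2 := H1.comp t2
  have H4 := H1.comp t4
  have key := (((((L.const_mul 2).add (H4.const_mul 2)).sub H2).sub H1).add_const
    (3 * Real.log 2)).div_const 3
  have e : (2 * (π / 4) + 2 * eulerMascheroniConstant - eulerMascheroniConstant
      - eulerMascheroniConstant + 3 * Real.log 2) / 3 = (π + 6 * Real.log 2) / 6 := by ring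
  rw [e] at key
  refine key.congr' ?_
  filter_upwards [Filter.eventually_ne_atTop 0] with N hN
  have hN' : (N:ℝ) ≠ 0 := by exact_mod_cast hN
  have l4 : Real.log 4 = 2 * Real.log 2 := by
    rw [show (4:ℝ) = 2 ^ 2 by norm_num, Real.log_pow]
    norm_num
  rw [partial_sum_eq]
  simp only [Function.comp_apply]
  push_cast
  rw [Real.log_mul (by norm_num) hN', Real.log_mul (by norm_num) hN', l4]
  ring
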